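/- Let H = (kG)*#_σ^τ L and let g_1,…,g_t be representatives of the orbits of L on G, with p_i := p_{g_i}, σ_i := σ_{g_i}, L_i := L_{g_i}, H_i := H_{g_i}. The simple H-modules are precisely the induced modules V̂ := H ⊗_{H_i}(p_i ⊗ V), where V ranges over the simple k_{σ_i}L_i-modules and i ranges over {1,…,t}; here V' := p_i ⊗ V is the H_i-module with action (p_h x̄)(p_i ⊗ v) = δ_{g_i,h} p_i ⊗ x̄·v. That is, each such V̂ is a simple H-module, and every simple H-module arises this way. -/

import Mathlib

/-- A presentation of the crossed product algebra `H = (kG)* #_σ L` attached to an action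
of a finite group `L` on a finite group `G` by automorphisms: `H` has `k`-basis
`{p_g x̄ : g ∈ G, x ∈ L}` with multiplication `(p_g x̄)(p_h ȳ) = δ_{g,ˣh} σ_g(x,y) p_g (xy)‾`. -/
structure DualCrossedProduct (k : Type) [Field k] (L G : Type) [Group L] [Group G]
    [Fintype L] [Fintype G] [DecidableEq G] [MulDistribMulAction L G]
    (σc : G → L → L → kˣ) (H : Type) [Ring H] [Algebra k H] where
  P : G → L → H
  basis : Function.Bijective fun f : G × L → k => ∑ p : G × L, f p • P p.1 p.2
  mul_P : ∀ (g h : G) (x y : L),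
    P g x * P h y = if g = x • h then ((σc g x y : k)) • P g (x * y) else 0
  sum_P_one : ∑ g : G, P g 1 = 1

section

variable (k : Type) [Field k] (L G : Type) [Group L] [Group G]
  [Fintype L] [Fintype G] [DecidableEq G] [MulDistribMulAction L G]
  (σc : G → L → L → kˣ) (H : Type) [Ring H] [Algebra k H]

/-- A projective representation of `L_g` on `V` with cocycle `σ_g`, i.e. a
`k_{σ_g}L_g`-module structure on `V`. -/
def IsProjRep (g : G) (V : Type) [AddCommGroup V] [Module k V]
    (ρ : ↥(MulAction.stabilizer L g) → V →ₗ[k] V) : Prop :=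
  ρ 1 = LinearMap.id ∧
    ∀ x y : ↥(MulAction.stabilizer L g), (ρ x).comp (ρ y) = ((σc g x y : k)) • ρ (x * y)

/-- Simplicity of a `k_{σ_g}L_g`-module `(V, ρ)`. -/
def IsSimpleRep (g : G) (V : Type) [AddCommGroup V] [Module k V]
    (ρ : ↥(MulAction.stabilizer L g) → V →ₗ[k] V) : Prop :=
  (∃ v : V, v ≠ 0) ∧
    ∀ U : Submodule k V, (∀ x, ∀ v ∈ U, ρ x v ∈ U) → U = ⊥ ∨ U = ⊤

/-- `X ≅ V̂ = H ⊗_{H_g} (p_g ⊗ V)`: the `H`-module `X` is (isomorphic to) the module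
induced from the `H_g`-module `V' = p_g ⊗ V`, on which `H_g` acts by
`(p_h x̄)(p_g ⊗ v) = δ_{g,h} p_g ⊗ x̄·v`.  This is witnessed by a `k`-linear embedding
`ε : V → X` (with image `p_g ⊗ V`) such that `X` is generated by `ε(V)` over `H` and
`dim_k X = |L : L_g|·dim_k V`. -/
def IsInducedFrom (hp : DualCrossedProduct k L G σc H) (g : G)
    (V : Type) [AddCommGroup V] [Module k V]
    (ρ : ↥(MulAction.stabilizer L g) → V →ₗ[k] V)
    (X : Type) [AddCommGroup X] [Module k X] [Module H X] [IsScalarTower k H X] : Prop :=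
  ∃ ε : V →ₗ[k] X, Function.Injective ε ∧
    (∀ (h : G) (x : ↥(MulAction.stabilizer L g)) (v : V),
      hp.P h x • ε v = if h = g then ε (ρ x v) else 0) ∧
    Submodule.span H (Set.range ε) = ⊤ ∧
    Module.finrank k X = (MulAction.stabilizer L g).index * Module.finrank k V

end

/-!
The orthogonal idempotents `p_g = p_g 1̄` sum to `1`, so an `H`-module `X` is the direct sum of
the weight spaces `X_g = p_g X`, and `x̄` carries `X_g` bijectively onto `X_{ˣg}`. Hence a
module that is generated by `X_g` is supported on the orbit of `g`, all its nonzero weight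
spaces have the same dimension, and its `H`-submodules are controlled by their intersections
with `X_g`. Since `p_g H p_g` is the twisted group algebra `k_{σ_g}L_g`, these intersections are
its submodules of `X_g`, so a module `X` generated by `X_g` is simple over `H` if and only if
`X_g` is simple over `k_{σ_g}L_g`. Finally, every simple `H`-module has a nonzero weight space
at some `g_i` and is generated by it.
-/

theorem span_eq_top_of_ne_bot {R A X : Type*} [Semiring R] [Ring A] [AddCommGroup X] [Module R X]
    [Module A X] [IsSimpleModule A X] {W : Submodule R X} (hW : W ≠ ⊥) :
    Submodule.span A (W : Set X) = ⊤ := by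
  refine (eq_bot_or_eq_top _).resolve_left fun hbot => hW ((Submodule.eq_bot_iff W).2 ?_)
  exact Submodule.span_eq_bot.1 hbot

namespace DualCrossedProduct

variable {k : Type} [Field k] {L G : Type} [Group L] [Group G]
  [Fintype L] [Fintype G] [DecidableEq G] [MulDistribMulAction L G]
  {σc : G → L → L → kˣ} {H : Type} [Ring H] [Algebra k H]
  (hp : DualCrossedProduct k L G σc H)

include hp

theorem linearIndependent_P : LinearIndependent k fun p : G × L => hp.P p.1 p.2 :=
  linearIndependent_iff_injective_fintypeLinearCombination.2 hp.basis.injective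

theorem exists_sum_smul_P (a : H) : ∃ f : G × L → k, ∑ p, f p • hp.P p.1 p.2 = a :=
  hp.basis.surjective a

theorem P_ne_zero (g : G) (x : L) : hp.P g x ≠ 0 :=
  hp.linearIndependent_P.ne_zero (g, x)

theorem module_finite : Module.Finite k H :=
  .of_surjective (Fintype.linearCombination k fun p : G × L => hp.P p.1 p.2) hp.exists_sum_smul_P

theorem cocycle_one_left (g : G) (x : L) : σc g 1 x = 1 := by
  have h : (σc g 1 x : k) • hp.P g x = (1 : k) • hp.P g x := by
    calc (σc g 1 x : k) • hp.P g x = (∑ h, hp.P h 1) * hp.P g x := by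
          simp [Finset.sum_mul, hp.mul_P]
      _ = (1 : k) • hp.P g x := by rw [hp.sum_P_one, one_mul, one_smul]
  exact Units.ext (smul_left_injective k (hp.P_ne_zero g x) h)

theorem cocycle_one_right (g : G) (x : L) : σc g x 1 = 1 := by
  have h : (σc g x 1 : k) • hp.P g x = (1 : k) • hp.P g x := by
    calc (σc g x 1 : k) • hp.P g x = hp.P g x * ∑ h, hp.P h 1 := by
          simp [Finset.mul_sum, hp.mul_P, ← inv_smul_eq_iff]
      _ = (1 : k) • hp.P g x := by rw [hp.sum_P_one, mul_one, one_smul]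
  exact Units.ext (smul_left_injective k (hp.P_ne_zero g x) h)

theorem P_one_mul_P (g h : G) (x : L) :
    hp.P g 1 * hp.P h x = if g = h then hp.P g x else 0 := by
  simp [hp.mul_P, hp.cocycle_one_left]

theorem P_mul_P_one (g h : G) (x : L) :
    hp.P g x * hp.P h 1 = if g = x • h then hp.P g x else 0 := by
  simp [hp.mul_P, hp.cocycle_one_right]

section Module

variable {X : Type*} [AddCommGroup X] [Module H X]

theorem sum_P_one_smul (n : X) : ∑ g, hp.P g 1 • n = n := by
  rw [← Finset.sum_smul, hp.sum_P_one, one_smul]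

theorem P_one_smul_P_smul (g h : G) (x : L) (n : X) :
    hp.P g 1 • hp.P h x • n = if g = h then hp.P g x • n else 0 := by
  rw [smul_smul, hp.P_one_mul_P, ite_smul, zero_smul]

variable [Module k X] [IsScalarTower k H X]

theorem P_smul_P_smul_of_eq {g h : G} {x : L} (hgh : g = x • h) (y : L) (n : X) :
    hp.P g x • hp.P h y • n = (σc g x y : k) • hp.P g (x * y) • n := by
  rw [smul_smul, hp.mul_P, if_pos hgh, smul_assoc]

theorem P_one_smul_eq_zero_of_P_smul_eq_zero {g h : G} {x y : L} (hgh : g = x • h)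
    (hxy : x * y = 1) {n : X} (hn : hp.P h y • n = 0) : hp.P g 1 • n = 0 := by
  have hσ : (σc g x y : k) • hp.P g 1 • n = 0 := by
    rw [← hxy, ← hp.P_smul_P_smul_of_eq hgh, hn, smul_zero]
  exact (smul_eq_zero.1 hσ).resolve_left (Units.ne_zero _)

variable (X) in
/-- The weight space `X_g = p_g X` of an `H`-module `X`, encoded as the fixed points of the
idempotent `p_g`. -/
def weightSpace (g : G) : Submodule k X :=
  LinearMap.eqLocus (Algebra.lsmul k k X (hp.P g 1)) LinearMap.id

theorem mem_weightSpace {g : G} {v : X} : v ∈ hp.weightSpace X g ↔ hp.P g 1 • v = v :=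
  Iff.rfl

theorem P_smul_mem_weightSpace (g : G) (x : L) (n : X) : hp.P g x • n ∈ hp.weightSpace X g := by
  rw [mem_weightSpace, P_one_smul_P_smul, if_pos rfl]

theorem P_smul_eq_zero_of_mem_weightSpace {g h : G} {x : L} {v : X}
    (hv : v ∈ hp.weightSpace X g) (hne : h ≠ x • g) : hp.P h x • v = 0 := by
  rw [← hp.mem_weightSpace.1 hv, smul_smul, hp.P_mul_P_one, if_neg hne, zero_smul]

variable (X) in
/-- The action of `p_g x̄` on `X`, as a map into the weight space `X_g`. -/
def toWeightSpace (g : G) (x : L) : X →ₗ[k] hp.weightSpace X g :=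
  (Algebra.lsmul k k X (hp.P g x)).codRestrict _ (hp.P_smul_mem_weightSpace g x)

variable (X) in
/-- The decomposition `X = ⨁ X_g` into weight spaces, as an isomorphism onto their product. -/
def weightDecomposition : X ≃ₗ[k] ((g : G) → hp.weightSpace X g) where
  __ := LinearMap.pi fun g => hp.toWeightSpace X g 1
  invFun f := ∑ g, (f g : X)
  left_inv n := hp.sum_P_one_smul n
  right_inv f := by
    ext g
    calc hp.P g 1 • ∑ h, (f h : X) = hp.P g 1 • (f g : X) := by
          rw [Finset.smul_sum]
          refine Fintype.sum_eq_single g fun h hne => ?_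
          exact hp.P_smul_eq_zero_of_mem_weightSpace (f h).2 (by rwa [one_smul, ne_comm])
      _ = f g := (f g).2

theorem injective_toWeightSpace_smul (g : G) (x : L) :
    Function.Injective ((hp.toWeightSpace X (x • g) x).domRestrict (hp.weightSpace X g)) := by
  rw [← LinearMap.ker_eq_bot, LinearMap.ker_eq_bot']
  intro v hv
  have hPv : hp.P (x • g) x • (v : X) = 0 := congrArg Subtype.val hv
  have hv0 : hp.P g 1 • (v : X) = 0 :=
    hp.P_one_smul_eq_zero_of_P_smul_eq_zero (inv_smul_smul x g).symm (inv_mul_cancel x) hPv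
  exact Subtype.ext ((hp.mem_weightSpace.1 v.2).symm.trans hv0)

variable (X) in
theorem rank_weightSpace_le_smul (g : G) (x : L) :
    Module.rank k (hp.weightSpace X g) ≤ Module.rank k (hp.weightSpace X (x • g)) :=
  LinearMap.rank_le_of_injective _ (hp.injective_toWeightSpace_smul g x)

variable (X) in
theorem rank_weightSpace_smul (g : G) (x : L) :
    Module.rank k (hp.weightSpace X (x • g)) = Module.rank k (hp.weightSpace X g) := by
  refine le_antisymm ?_ (hp.rank_weightSpace_le_smul X g x)
  have hle := hp.rank_weightSpace_le_smul X (x • g) x⁻¹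
  rwa [inv_smul_smul] at hle

theorem weightSpace_smul_eq_bot_iff {g : G} {x : L} :
    hp.weightSpace X (x • g) = ⊥ ↔ hp.weightSpace X g = ⊥ := by
  rw [← Submodule.rank_eq_zero, ← Submodule.rank_eq_zero, hp.rank_weightSpace_smul]

variable (X) in
theorem exists_weightSpace_ne_bot [Nontrivial X] : ∃ g, hp.weightSpace X g ≠ ⊥ := by
  by_contra! hbot
  have (g : G) : Subsingleton (hp.weightSpace X g) := by
    rw [hbot g]
    infer_instance
  exact not_subsingleton X (hp.weightDecomposition X).toEquiv.subsingleton

theorem P_one_smul_mem_of_mem_span {g h : G} {W : Set X} (hW : W ⊆ hp.weightSpace X g)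
    {U : Submodule k X} (hU : ∀ x : L, h = x • g → ∀ w ∈ W, hp.P h x • w ∈ U)
    {n : X} (hn : n ∈ Submodule.span H W) : hp.P h 1 • n ∈ U := by
  have hP (x : L) {w : X} (hw : w ∈ W) : hp.P h x • w ∈ U := by
    by_cases hx : h = x • g
    · exact hU x hx w hw
    · simp [hp.P_smul_eq_zero_of_mem_weightSpace (hW hw) hx]
  induction hn using Submodule.closure_induction with
  | zero => simp
  | add a b _ _ ha hb => simpa only [smul_add] using U.add_mem ha hb
  | smul_mem a w hw =>
    obtain ⟨f, rfl⟩ := hp.exists_sum_smul_P a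
    simp only [Finset.sum_smul, Finset.smul_sum, smul_assoc, smul_comm (hp.P h 1) (f _),
      P_one_smul_P_smul]
    refine U.sum_mem fun p _ => U.smul_mem _ ?_
    split_ifs
    exacts [hP p.2 hw, U.zero_mem]

theorem mem_of_mem_span_of_mem_weightSpace {g : G} {W : Submodule k X}
    (hW : W ≤ hp.weightSpace X g)
    (hstable : ∀ x ∈ MulAction.stabilizer L g, ∀ w ∈ W, hp.P g x • w ∈ W) {v : X}
    (hv : v ∈ hp.weightSpace X g) (hspan : v ∈ Submodule.span H (W : Set X)) : v ∈ W := by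
  rw [← hp.mem_weightSpace.1 hv]
  exact hp.P_one_smul_mem_of_mem_span hW (fun x hx => hstable x hx.symm) hspan

theorem weightSpace_eq_bot_of_notMem_orbit {g h : G}
    (hspan : Submodule.span H (hp.weightSpace X g : Set X) = ⊤) (hh : h ∉ MulAction.orbit L g) :
    hp.weightSpace X h = ⊥ := by
  rw [eq_bot_iff]
  intro v hv
  rw [← hp.mem_weightSpace.1 hv]
  exact hp.P_one_smul_mem_of_mem_span subset_rfl (fun x hx => absurd ⟨x, hx.symm⟩ hh)
    (hspan ▸ Submodule.mem_top)

theorem eq_bot_of_forall_mem_weightSpace {g : G}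
    (hspan : Submodule.span H (hp.weightSpace X g : Set X) = ⊤) {N : Submodule H X}
    (hN : ∀ n ∈ N, n ∈ hp.weightSpace X g → n = 0) : N = ⊥ := by
  rw [eq_bot_iff]
  intro n hn
  rw [Submodule.mem_bot, ← hp.sum_P_one_smul n]
  refine Finset.sum_eq_zero fun h _ => ?_
  by_cases hh : h ∈ MulAction.orbit L g
  · obtain ⟨x, rfl⟩ := hh
    exact hp.P_one_smul_eq_zero_of_P_smul_eq_zero rfl (mul_inv_cancel x)
      (hN _ (N.smul_mem _ hn) (hp.P_smul_mem_weightSpace g x⁻¹ n))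
  · have hmem := hp.P_smul_mem_weightSpace h 1 n
    rwa [hp.weightSpace_eq_bot_of_notMem_orbit hspan hh] at hmem

theorem finrank_eq_index_mul_finrank_weightSpace [Module.Finite k X] {g : G}
    (hspan : Submodule.span H (hp.weightSpace X g : Set X) = ⊤) :
    Module.finrank k X =
      (MulAction.stabilizer L g).index * Module.finrank k (hp.weightSpace X g) := by
  classical
  have hrank (h : G) : Module.finrank k (hp.weightSpace X h) =
      if h ∈ MulAction.orbit L g then Module.finrank k (hp.weightSpace X g) else 0 := by
    split_ifs with hh
    · obtain ⟨x, rfl⟩ := hh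
      exact congrArg Cardinal.toNat (hp.rank_weightSpace_smul X g x)
    · rw [hp.weightSpace_eq_bot_of_notMem_orbit hspan hh, finrank_bot]
  calc Module.finrank k X = ∑ h, Module.finrank k (hp.weightSpace X h) := by
        rw [(hp.weightDecomposition X).finrank_eq, Module.finrank_pi_fintype]
    _ = (MulAction.orbit L g).ncard * Module.finrank k (hp.weightSpace X g) := by
        rw [Finset.sum_congr rfl fun h _ => hrank h, ← Finset.sum_filter, Finset.sum_const,
          smul_eq_mul, Set.ncard_eq_toFinset_card', Set.filter_mem_univ_eq_toFinset]
    _ = _ := by rw [MulAction.index_stabilizer]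

variable {hp} in
theorem range_eq_weightSpace {g : G} {V : Type*} [AddCommGroup V] [Module k V]
    {ρ : MulAction.stabilizer L g → V →ₗ[k] V} (hρ : ρ 1 = LinearMap.id) {ε : V →ₗ[k] X}
    (hε : ∀ (x : MulAction.stabilizer L g) (v : V), hp.P g x • ε v = ε (ρ x v))
    (hspan : Submodule.span H (Set.range ε) = ⊤) :
    LinearMap.range ε = hp.weightSpace X g := by
  have hle : LinearMap.range ε ≤ hp.weightSpace X g := by
    rintro _ ⟨v, rfl⟩
    simpa [mem_weightSpace, hρ] using hε 1 v
  refine le_antisymm hle fun v hv => ?_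
  refine hp.mem_of_mem_span_of_mem_weightSpace hle ?_ hv (by simp [LinearMap.coe_range, hspan])
  rintro x hx _ ⟨w, rfl⟩
  exact ⟨ρ ⟨x, hx⟩ w, (hε ⟨x, hx⟩ w).symm⟩

variable (X) in
/-- The action of the twisted group algebra `k_{σ_g}L_g` on the weight space `X_g`. -/
def weightRep (g : G) (x : MulAction.stabilizer L g) :
    hp.weightSpace X g →ₗ[k] hp.weightSpace X g :=
  (hp.toWeightSpace X g x).domRestrict _

end Module

section Correspondence

variable (X : Type) [AddCommGroup X] [Module k X] [Module H X] [IsScalarTower k H X]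

theorem isProjRep_weightRep (g : G) :
    IsProjRep k L G σc g (hp.weightSpace X g) (hp.weightRep X g) := by
  constructor
  · ext v
    exact v.2
  · intro x y
    ext v
    exact hp.P_smul_P_smul_of_eq x.2.symm y (v : X)

variable {X}

theorem isSimpleRep_weightRep [IsSimpleModule H X] {g : G} (hne : hp.weightSpace X g ≠ ⊥) :
    IsSimpleRep k L G g (hp.weightSpace X g) (hp.weightRep X g) := by
  obtain ⟨v, hv, hv0⟩ := Submodule.exists_mem_ne_zero_of_ne_bot hne
  refine ⟨⟨⟨v, hv⟩, fun h => hv0 (congrArg Subtype.val h)⟩, fun U hU => ?_⟩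
  rw [or_iff_not_imp_left]
  intro hU0
  let W : Submodule k X := U.map (hp.weightSpace X g).subtype
  have hW : W ≤ hp.weightSpace X g := Submodule.map_subtype_le _ U
  have hW0 : W ≠ ⊥ :=
    ((Submodule.map_injective_of_injective (Submodule.subtype_injective _)).ne_iff'
      (Submodule.map_bot _)).2 hU0
  have hstable : ∀ x ∈ MulAction.stabilizer L g, ∀ w ∈ W, hp.P g x • w ∈ W := by
    rintro x hx _ ⟨u, hu, rfl⟩
    exact ⟨_, hU ⟨x, hx⟩ u hu, rfl⟩
  rw [eq_top_iff]
  intro w _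
  have hspan : Submodule.span H (W : Set X) = ⊤ := span_eq_top_of_ne_bot hW0
  have hw : (w : X) ∈ W :=
    hp.mem_of_mem_span_of_mem_weightSpace hW hstable w.2 (hspan ▸ Submodule.mem_top)
  simpa [W] using hw

theorem isInducedFrom_weightRep [Module.Finite k X] {g : G}
    (hspan : Submodule.span H (hp.weightSpace X g : Set X) = ⊤) :
    IsInducedFrom k L G σc H hp g (hp.weightSpace X g) (hp.weightRep X g) X := by
  refine ⟨(hp.weightSpace X g).subtype, Submodule.subtype_injective _, fun h x v => ?_, ?_,
    hp.finrank_eq_index_mul_finrank_weightSpace hspan⟩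
  · split_ifs with hhg
    · rw [hhg]
      rfl
    · exact hp.P_smul_eq_zero_of_mem_weightSpace v.2 (by rwa [x.2])
  · simpa using hspan

variable {hp} in
theorem isSimpleModule_of_isInducedFrom {g : G} {V : Type} [AddCommGroup V] [Module k V]
    {ρ : MulAction.stabilizer L g → V →ₗ[k] V} (hρ : IsProjRep k L G σc g V ρ)
    (hV : IsSimpleRep k L G g V ρ) (hX : IsInducedFrom k L G σc H hp g V ρ X) :
    IsSimpleModule H X := by
  obtain ⟨ε, hinj, hact, hspan, -⟩ := hX
  obtain ⟨⟨v₀, hv₀⟩, hsimple⟩ := hV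
  have hε (x : MulAction.stabilizer L g) (v : V) : hp.P g x • ε v = ε (ρ x v) := by
    rw [hact, if_pos rfl]
  have hrange := range_eq_weightSpace hρ.1 hε hspan
  have : Nontrivial X := ⟨ε v₀, 0, (map_ne_zero_iff ε hinj).2 hv₀⟩
  rw [isSimpleModule_iff]
  refine { eq_bot_or_eq_top := fun N => ?_ }
  have hstable (x : MulAction.stabilizer L g) :
      ∀ v ∈ (N.restrictScalars k).comap ε, ρ x v ∈ (N.restrictScalars k).comap ε := by
    intro v hv
    change ε (ρ x v) ∈ N
    exact hε x v ▸ N.smul_mem _ hv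
  refine (hsimple _ hstable).imp (fun hbot => ?_) fun htop => ?_
  · refine hp.eq_bot_of_forall_mem_weightSpace (g := g) ?_ fun n hn hng => ?_
    · rwa [← hrange]
    · obtain ⟨v, rfl⟩ := hrange.ge hng
      have hv : v ∈ (N.restrictScalars k).comap ε := hn
      rw [(Submodule.eq_bot_iff _).1 hbot v hv, map_zero]
  · rw [eq_top_iff, ← hspan, Submodule.span_le]
    rintro _ ⟨v, rfl⟩
    exact (Submodule.eq_top_iff'.1 htop v :)

end Correspondence

end DualCrossedProduct

open DualCrossedProduct in
theorem simple_modules_of_dual_crossed_product_general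
    {k : Type} [Field k] {L G : Type} [Group L] [Group G]
    [Fintype L] [Fintype G] [DecidableEq G] [MulDistribMulAction L G]
    {σc : G → L → L → kˣ} {H : Type} [Ring H] [Algebra k H]
    (hp : DualCrossedProduct k L G σc H)
    {ι : Type*} (gs : ι → G) (hgs : ∀ g : G, ∃ i, ∃ x : L, x • gs i = g)
    (X : Type) [AddCommGroup X] [Module k X] [Module H X] [IsScalarTower k H X] :
    IsSimpleModule H X ↔
      ∃ (i : ι) (V : ModuleCat k) (ρ : MulAction.stabilizer L (gs i) → V →ₗ[k] V),
        Module.Finite k V ∧ IsProjRep k L G σc (gs i) V ρ ∧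
          IsSimpleRep k L G (gs i) V ρ ∧ IsInducedFrom k L G σc H hp (gs i) V ρ X := by
  refine ⟨fun hX => ?_, fun ⟨i, V, ρ, _, hρ, hV, hind⟩ =>
    isSimpleModule_of_isInducedFrom hρ hV hind⟩
  have := hp.module_finite
  have : Module.Finite k X := .trans H X
  have : Nontrivial X := IsSimpleModule.nontrivial H X
  obtain ⟨g, hg⟩ := hp.exists_weightSpace_ne_bot X
  obtain ⟨i, x, rfl⟩ := hgs g
  have hi : hp.weightSpace X (gs i) ≠ ⊥ := mt hp.weightSpace_smul_eq_bot_iff.2 hg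
  exact ⟨i, .of k (hp.weightSpace X (gs i)), hp.weightRep X (gs i),
    inferInstanceAs (Module.Finite k (hp.weightSpace X (gs i))),
    hp.isProjRep_weightRep X (gs i), hp.isSimpleRep_weightRep hi,
    hp.isInducedFrom_weightRep (span_eq_top_of_ne_bot hi)⟩

/-- **Proposition 4.3 (Kashina–Mason–Montgomery)**: for `H = (kG)* #_σ^τ L` and
`g_1, …, g_t` a set of representatives of the orbits of `L` on `G`, the simple
`H`-modules are precisely the modules `V̂ = H ⊗_{H_i}(p_i ⊗ V)` induced from `H_i`,
where `V` is a simple `k_{σ_i}L_i`-module and `i ∈ {1, …, t}`; here `H_i` acts on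
`V' = p_i ⊗ V` by `(p_h x̄)(p_i ⊗ v) = δ_{g_i,h} p_i ⊗ x̄·v`. -/
theorem simple_modules_of_dual_crossed_product
    (k : Type) [Field k] [IsAlgClosed k] (L G : Type) [Group L] [Group G]
    [Fintype L] [Fintype G] [DecidableEq G] [MulDistribMulAction L G]
    (σc : G → L → L → kˣ) (H : Type) [Ring H] [Algebra k H]
    (hp : DualCrossedProduct k L G σc H)
    (t : ℕ) (gs : Fin t → G)
    (hgs : ∀ g : G, ∃! i : Fin t, ∃ x : L, x • gs i = g) :
    -- each module induced from a simple `k_{σ_i}L_i`-module is a simple `H`-module …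
    (∀ (i : Fin t) (V : Type) [AddCommGroup V] [Module k V] [Module.Finite k V]
      (ρ : ↥(MulAction.stabilizer L (gs i)) → V →ₗ[k] V),
      IsProjRep k L G σc (gs i) V ρ → IsSimpleRep k L G (gs i) V ρ →
      ∀ (X : Type) [AddCommGroup X] [Module k X] [Module H X] [IsScalarTower k H X],
        IsInducedFrom k L G σc H hp (gs i) V ρ X → IsSimpleModule H X) ∧
    -- … and every (finite-dimensional) simple `H`-module arises this way
    (∀ (X : Type) [AddCommGroup X] [Module k X] [Module H X] [IsScalarTower k H X]
      [Module.Finite k X], IsSimpleModule H X →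
      ∃ (i : Fin t) (V : ModuleCat k)
        (ρ : ↥(MulAction.stabilizer L (gs i)) → V →ₗ[k] V),
        Module.Finite k V ∧ IsProjRep k L G σc (gs i) V ρ ∧
          IsSimpleRep k L G (gs i) V ρ ∧
          IsInducedFrom k L G σc H hp (gs i) V ρ X) := by
  exact ⟨fun i V _ _ hV ρ hρ hsimple X _ _ _ _ hX =>
      (simple_modules_of_dual_crossed_product_general hp gs (fun g => (hgs g).exists) X).2
        ⟨i, .of k V, ρ, hV, hρ, hsimple, hX⟩,
    fun X _ _ _ _ _ =>
      (simple_modules_of_dual_crossed_product_general hp gs (fun g => (hgs g).exists) X).1⟩
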